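/- Let q ≥ 5 be a power of an odd prime, let n = (q² + 1)/2, and let β be a primitive 2n-th root of unity in F_{q⁴}. For an integer i with 1 ≤ i ≤ (n−1)/2 − 1, let C be the negacyclic code of length n over F_{q²} generated by g(x) = M^{(n)}(x)·M^{(n+2)}(x)·⋯·M^{(n+2i)}(x), where M^{(j)}(x) is the minimal polynomial of β^j over F_{q²}. Then C is an MDS code with parameters [n, n−2i−1, 2i+2]_{q²}: its dimension over F_{q²} is n−2i−1 and its minimum Hamming distance equals 2i+2. -/

import Mathlib

open Polynomial

/-- The polynomial `c₀ + c₁ x + ⋯ + c_{n-1} x^{n-1}` associated to the vector `c`. -/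
noncomputable def vecPoly {F : Type*} [Semiring F] {n : ℕ} (c : Fin n → F) : F[X] :=
  ∑ k : Fin n, Polynomial.C (c k) * X ^ (k : ℕ)

section VecPoly

variable {F : Type*} [Semiring F] {n : ℕ}

theorem vecPoly_coeff (c : Fin n → F) (k : Fin n) : (vecPoly c).coeff k = c k := by
  simp [vecPoly, finsetSum_coeff, coeff_C_mul, coeff_X_pow, Fin.val_inj]

theorem vecPoly_injective : Function.Injective (vecPoly : (Fin n → F) → F[X]) := by
  intro b c h
  funext k
  rw [← vecPoly_coeff b, h, vecPoly_coeff]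

theorem degree_vecPoly_lt (c : Fin n → F) : (vecPoly c).degree < n :=
  degree_sum_fin_lt c

theorem vecPoly_coeff_of_degree_lt {P : F[X]} (hP : P.degree < n) :
    vecPoly (fun k : Fin n => P.coeff k) = P := by
  rcases eq_or_ne P 0 with rfl | h0
  · simp [vecPoly]
  · conv_rhs => rw [P.as_sum_range_C_mul_X_pow' ((natDegree_lt_iff_degree_lt h0).2 hP)]
    exact Fin.sum_univ_eq_sum_range (fun k => C (P.coeff k) * X ^ k) n

end VecPoly

/-- A polynomial of degree `D ≤ n` has `|F| ^ (n - D)` multiples of degree less than `n`. -/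
theorem card_dvd_vecPoly {F : Type*} [Field F] [Fintype F] {g : F[X]} (hg : g ≠ 0)
    {n : ℕ} (hn : g.natDegree ≤ n) :
    Nat.card {c : Fin n → F // g ∣ vecPoly c} = Fintype.card F ^ (n - g.natDegree) := by
  have hdeg (h : F[X]) : (g * h).degree < n ↔ h.degree < (n - g.natDegree : ℕ) := by
    rcases eq_or_ne h 0 with rfl | hh
    · simp
    · rw [degree_eq_natDegree (mul_ne_zero hg hh), degree_eq_natDegree hh,
        natDegree_mul hg hh, Nat.cast_lt, Nat.cast_lt]
      omega
  have hmul (b : Fin (n - g.natDegree) → F) :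
      vecPoly (fun k : Fin n => (g * vecPoly b).coeff k) = g * vecPoly b :=
    vecPoly_coeff_of_degree_lt ((hdeg _).2 (degree_vecPoly_lt b))
  let f : (Fin (n - g.natDegree) → F) → {c : Fin n → F // g ∣ vecPoly c} := fun b =>
    ⟨fun k => (g * vecPoly b).coeff k, (hmul b).symm ▸ dvd_mul_right _ _⟩
  have hf : Function.Bijective f := by
    constructor
    · intro b c h
      have h' := congrArg vecPoly (Subtype.ext_iff.1 h)
      simp only [f, hmul] at h'
      exact vecPoly_injective (mul_left_cancel₀ hg h')
    · rintro ⟨c, h, hc⟩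
      have hh : h.degree < (n - g.natDegree : ℕ) := (hdeg h).1 (hc ▸ degree_vecPoly_lt c)
      refine ⟨fun k => h.coeff k, Subtype.ext (vecPoly_injective ?_)⟩
      simp only [f, hmul]
      rw [vecPoly_coeff_of_degree_lt hh, hc]
  rw [← Nat.card_congr (Equiv.ofBijective f hf)]
  simp [Nat.card_eq_fintype_card]

theorem hammingNorm_coeff_le {F : Type*} [Semiring F] [DecidableEq F] (P : F[X]) (n : ℕ) :
    hammingNorm (fun k : Fin n => P.coeff k) ≤ P.natDegree + 1 := by
  rw [← Finset.card_range (P.natDegree + 1)]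
  refine Finset.card_le_card_of_injOn (fun k : Fin n => (k : ℕ)) ?_ Fin.val_injective.injOn
  intro k hk
  simp only [Finset.coe_filter, Finset.mem_univ, true_and, Set.mem_ofPred_eq] at hk
  simpa [Nat.lt_succ_iff] using le_natDegree_of_ne_zero hk

/-- The BCH bound. -/
theorem bch_bound {F E : Type*} [Field F] [DecidableEq F] [Field E] [Algebra F E] {n D : ℕ}
    {a γ : E} (ha : a ≠ 0) (hγ : ∀ k l : Fin n, γ ^ (k : ℕ) = γ ^ (l : ℕ) → k = l)
    {c : Fin n → F} (hc : c ≠ 0) (hroot : ∀ k < D, aeval (a * γ ^ k) (vecPoly c) = 0) :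
    D < hammingNorm c := by
  classical
  by_contra! hle
  obtain ⟨l, hl⟩ := Function.ne_iff.1 hc
  set S : Finset (Fin n) := {k | c k ≠ 0} with hS
  have hlS : l ∈ S := by simpa [hS] using hl
  have hcard : S.card ≤ D := hle
  set h : E[X] := ∏ m ∈ S.erase l, (X - C (γ ^ (m : ℕ))) with hh
  have hdeg : h.natDegree < D := by
    rw [hh, natDegree_finsetProd_X_sub_C_eq_card, Finset.card_erase_of_mem hlS]
    have := Finset.card_pos.2 ⟨l, hlS⟩
    omega
  have hsum : ∑ m : Fin n, algebraMap F E (c m) * a ^ (m : ℕ) * h.eval (γ ^ (m : ℕ)) = 0 := by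
    simp_rw [eval_eq_sum_range' hdeg, Finset.mul_sum]
    rw [Finset.sum_comm]
    refine Finset.sum_eq_zero fun k hk => ?_
    have hk0 := hroot k (Finset.mem_range.1 hk)
    simp only [vecPoly, map_sum, map_mul, aeval_C, map_pow, aeval_X] at hk0
    rw [← mul_zero (h.coeff k), ← hk0, Finset.mul_sum]
    refine Finset.sum_congr rfl fun m _ => ?_
    rw [mul_pow, ← pow_mul, ← pow_mul, mul_comm k]
    ring
  rw [Finset.sum_eq_single l] at hsum
  · have hl0 : algebraMap F E (c l) ≠ 0 := by simpa using hl
    refine mul_ne_zero (mul_ne_zero hl0 (pow_ne_zero _ ha)) ?_ hsum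
    rw [hh, eval_prod, Finset.prod_ne_zero_iff]
    intro m hm
    simp only [eval_sub, eval_X, eval_C, sub_ne_zero]
    exact fun heq => (Finset.ne_of_mem_erase hm) (hγ _ _ heq).symm
  · intro m _ hml
    by_cases hm : c m = 0
    · simp [hm]
    · have hmem : m ∈ S.erase l := by simp [hS, hm, hml]
      rw [hh, eval_prod, Finset.prod_eq_zero hmem (by simp), mul_zero]
  · simp

theorem aeval_pow_card {F E : Type*} [Field F] [Fintype F] [Field E] [Algebra F E]
    (f : F[X]) (x : E) : aeval (x ^ Fintype.card F) f = aeval x f ^ Fintype.card F := by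
  simpa using aeval_algHom_apply (FiniteField.frobeniusAlgHom F E) x f

/-- Let `q ≥ 5` be a power of an odd prime, `n = (q² + 1)/2`, and `β`
a primitive `2n`-th root of unity in `E = F_{q⁴}`.  For `1 ≤ i ≤ (n-1)/2 - 1`, the
negacyclic code `C` of length `n` over `F = F_{q²}` generated by
`g = M^{(n)} · M^{(n+2)} ⋯ M^{(n+2i)}` is an MDS code with parameters
`[n, n-2i-1, 2i+2]_{q²}`: it has `(q²)^(n-2i-1)` codewords (dimension `n-2i-1`) and
minimum Hamming distance exactly `2i + 2`. -/
theorem negacyclic_MDS_half_q2_plus_one_even (p e q n i : ℕ) (hp : p.Prime)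
    (hpodd : Odd p) (he : 0 < e) (hq : q = p ^ e) (hq5 : 5 ≤ q)
    (hn : n = (q ^ 2 + 1) / 2) (hi1 : 1 ≤ i) (hi2 : i ≤ (n - 1) / 2 - 1)
    (F E : Type*) [Field F] [Field E] [Algebra F E]
    [Fintype F] [Fintype E] [DecidableEq F]
    (hF : Fintype.card F = q ^ 2) (hE : Fintype.card E = q ^ 4)
    (β : E) (hβ : orderOf β = 2 * n)
    (g : F[X]) (hg : g = ∏ j ∈ Finset.range (i + 1), minpoly F (β ^ (n + 2 * j))) :
    Nat.card {c : Fin n → F // g ∣ vecPoly c} = (q ^ 2) ^ (n - 2 * i - 1) ∧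
    (∀ c : Fin n → F, g ∣ vecPoly c → c ≠ 0 → 2 * i + 2 ≤ hammingNorm c) ∧
    (∃ c : Fin n → F, g ∣ vecPoly c ∧ c ≠ 0 ∧ hammingNorm c = 2 * i + 2) := by
  have hqodd : Odd q := hq ▸ hpodd.pow
  have h2n : 2 * n = q ^ 2 + 1 := by
    obtain ⟨r, hr⟩ := hqodd.pow (n := 2)
    omega
  have hlt : 2 * i + 1 < n := by omega
  have hβ0 : β ≠ 0 := by
    rintro rfl
    rw [orderOf_zero] at hβ
    omega
  have hβpow : β ^ (2 * n) = 1 := hβ ▸ pow_orderOf_eq_one β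
  have hint (x : E) : IsIntegral F x := Algebra.IsIntegral.isIntegral x
  have hfin : Module.finrank F E = 2 := by
    have h := Module.card_eq_pow_finrank (K := F) (V := E)
    rw [hE, hF, ← pow_mul] at h
    have := Nat.pow_right_injective (by omega : 2 ≤ q) h
    omega
  have hβn : β ^ n = -1 := by
    have hsq : (β ^ n) ^ 2 = 1 := by rw [← pow_mul, mul_comm, hβpow]
    refine (mul_self_eq_one_iff.1 (sq (β ^ n) ▸ hsq)).resolve_left ?_
    exact pow_ne_one_of_lt_orderOf (by omega) (by omega)
  have hg0 : g ≠ 0 := by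
    rw [hg, Finset.prod_ne_zero_iff]
    exact fun j _ => minpoly.ne_zero (hint _)
  have hinj (k l : Fin n) (h : (β ^ 2) ^ (k : ℕ) = (β ^ 2) ^ (l : ℕ)) : k = l := by
    rw [← pow_mul, ← pow_mul] at h
    have := pow_injOn_Iio_orderOf (x := β) (by simp [hβ]) (by simp [hβ]) h
    exact Fin.ext (by omega)
  have hplus (j : ℕ) (hj : j ≤ i) : aeval (β ^ (n + 2 * j)) g = 0 := by
    rw [hg, map_prod]
    exact Finset.prod_eq_zero (Finset.mem_range.2 (by omega : j < i + 1)) (minpoly.aeval _ _)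
  have hminus (j : ℕ) (hj : j ≤ i) : aeval (β ^ (n - 2 * j)) g = 0 := by
    have hconj : (β ^ (n + 2 * j)) ^ Fintype.card F = β ^ (n - 2 * j) := by
      refine mul_right_cancel₀ (pow_ne_zero (n + 2 * j) hβ0) ?_
      rw [← pow_succ, hF, ← h2n, ← pow_add, (by omega : n - 2 * j + (n + 2 * j) = 2 * n), hβpow,
        ← pow_mul, mul_comm, pow_mul, hβpow, one_pow]
    rw [← hconj, aeval_pow_card, hplus j hj, zero_pow Fintype.card_ne_zero]
  have hroots (k : ℕ) (hk : k < 2 * i + 1) : aeval (β ^ (n - 2 * i) * (β ^ 2) ^ k) g = 0 := by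
    rw [← pow_mul, ← pow_add]
    rcases le_total i k with h | h
    · rw [(by omega : n - 2 * i + 2 * k = n + 2 * (k - i))]
      exact hplus _ (by omega)
    · rw [(by omega : n - 2 * i + 2 * k = n - 2 * (i - k))]
      exact hminus _ (by omega)
  have ha : β ^ (n - 2 * i) ≠ 0 := pow_ne_zero _ hβ0
  have hdeg_le : g.natDegree ≤ 2 * i + 1 := by
    rw [hg, natDegree_prod _ _ fun j _ => minpoly.ne_zero (hint _), Finset.sum_range_succ']
    have hlin : (minpoly F (β ^ (n + 2 * 0))).natDegree = 1 := by
      rw [mul_zero, add_zero, hβn, ← map_one (algebraMap F E), ← map_neg, minpoly.eq_X_sub_C,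
        natDegree_X_sub_C]
    have hquad : ∑ j ∈ Finset.range i, (minpoly F (β ^ (n + 2 * (j + 1)))).natDegree
        ≤ i * 2 := by
      simpa using Finset.sum_le_card_nsmul (Finset.range i)
        (fun j => (minpoly F (β ^ (n + 2 * (j + 1)))).natDegree) 2
        fun j _ => hfin ▸ minpoly.natDegree_le _
    omega
  have hbch (c : Fin n → F) (hgc : g ∣ vecPoly c) (hc : c ≠ 0) : 2 * i + 2 ≤ hammingNorm c :=
    bch_bound ha hinj hc fun k hk => aeval_eq_zero_of_dvd_aeval_eq_zero hgc (hroots k hk)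
  have hgvec : vecPoly (fun k : Fin n => g.coeff k) = g :=
    vecPoly_coeff_of_degree_lt <| (natDegree_lt_iff_degree_lt hg0).1 (by omega)
  have hgne : (fun k : Fin n => g.coeff k) ≠ 0 := by
    intro h
    apply hg0
    rw [← hgvec, h]
    simp [vecPoly]
  have hgnorm := hbch _ (by rw [hgvec]) hgne
  have hgnorm_le := hammingNorm_coeff_le g n
  have hdeg : g.natDegree = 2 * i + 1 := by omega
  refine ⟨?_, hbch, _, by rw [hgvec], hgne, by omega⟩
  rw [card_dvd_vecPoly hg0 (by omega), hdeg, hF, Nat.sub_sub]
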